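/- arXiv:2501.00716 — 2 statements merged into one kernel-verified Lean document; each statement's English description precedes it below -/
import Mathlib

section
/- The real number ζ(3) = ∑_{m=1}^∞ 1/m³ is irrational. -/
namespace Apery

/-- `t n k = C(n,k) C(n+k,k)` -/
noncomputable def t (n k : ℕ) : ℝ := (n.choose k : ℝ) * ((n + k).choose k : ℝ)

lemma t_zero_right (n : ℕ) : t n 0 = 1 := by simp [t]

lemma t_eq_zero {n k : ℕ} (h : n < k) : t n k = 0 := by
  simp [t, Nat.choose_eq_zero_of_lt h]

lemma t_pos {n k : ℕ} (h : k ≤ n) : 0 < t n k := by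
  unfold t
  have h1 : 0 < n.choose k := Nat.choose_pos h
  have h2 : 0 < (n + k).choose k := Nat.choose_pos (by omega)
  positivity

lemma t_E1 (n k : ℕ) : t (n + 1) k * ((n : ℝ) + 1 - k) = (n + 1 + k) * t n k := by
  rcases le_or_gt k (n + 1) with hk | hk
  · have h1 := Nat.choose_mul_succ_eq n k
    have h2 := Nat.choose_mul_succ_eq (n + k) k
    have e : n + k + 1 - k = n + 1 := by omega
    rw [e] at h2
    have h1' : (n.choose k : ℝ) * (n + 1) = (n + 1).choose k * ((n : ℝ) + 1 - k) := by
      have := congrArg (Nat.cast : ℕ → ℝ) h1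
      rw [Nat.cast_mul, Nat.cast_mul, Nat.cast_sub hk] at this
      push_cast at this
      exact this
    have h2' : ((n + k).choose k : ℝ) * (n + k + 1) = (n + 1 + k).choose k * ((n : ℝ) + 1) := by
      have := congrArg (Nat.cast : ℕ → ℝ) h2
      push_cast at this
      rw [show n + 1 + k = n + k + 1 by ring]
      exact this
    unfold t
    have hn : (n : ℝ) + 1 ≠ 0 := by positivity
    apply mul_right_cancel₀ hn
    linear_combination (-((n + 1).choose k : ℝ) * ((n : ℝ) + 1 - k)) * h2' - ((n + k).choose k : ℝ) * (n + k + 1) * h1'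
  · rw [t_eq_zero hk, t_eq_zero (by omega)]; simp

lemma t_E2 (n k : ℕ) :
    t n (k + 1) * ((k : ℝ) + 1) ^ 2 = ((n : ℝ) - k) * (n + k + 1) * t n k := by
  rcases le_or_gt k n with hk | hk
  · have h1 := Nat.choose_succ_right_eq n k
    have h2 := Nat.add_one_mul_choose_eq (n + k) k
    have h1' : (n.choose (k + 1) : ℝ) * (k + 1) = n.choose k * ((n : ℝ) - k) := by
      have := congrArg (Nat.cast : ℕ → ℝ) h1
      rw [Nat.cast_mul, Nat.cast_mul, Nat.cast_sub hk] at this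
      push_cast at this
      exact this
    have h2' : ((n : ℝ) + k + 1) * ((n + k).choose k : ℝ)
        = (n + (k + 1)).choose (k + 1) * ((k : ℝ) + 1) := by
      have := congrArg (Nat.cast : ℕ → ℝ) h2
      push_cast at this
      rw [← add_assoc]
      exact this
    unfold t
    linear_combination ((n + (k + 1)).choose (k + 1) : ℝ) * ((k : ℝ) + 1) * h1'
      - (n.choose k : ℝ) * ((n : ℝ) - k) * h2'
  · rw [t_eq_zero hk, t_eq_zero (by omega)]; simp

/-- common basis element -/
lemma t_basis (n k : ℕ) : ∃ s : ℝ,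
    t (n + 2) (k + 1) = s * (n + k + 2) * (n + k + 3) ∧
    t (n + 1) (k + 1) = s * (n + k + 2) * (n + 1 - k) ∧
    t n (k + 1) = s * (n + 1 - k) * (n - k) ∧
    t (n + 1) k = s * (k + 1) ^ 2 := by
  have hk : ((k : ℝ) + 1) ^ 2 ≠ 0 := by positivity
  have a1 := t_E2 (n + 2) k
  have a2 := t_E2 (n + 1) k
  have a3 := t_E2 n k
  have b1 := t_E1 (n + 1) k
  have b2 := t_E1 n k
  push_cast at *
  refine ⟨t (n + 1) k / (k + 1) ^ 2, ?_, ?_, ?_, ?_⟩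
  · field_simp
    linear_combination a1 + (n + k + 3 : ℝ) * b1
  · field_simp
    linear_combination a2
  · field_simp
    linear_combination a3 - (n - k : ℝ) * b2
  · field_simp

noncomputable def c (n k : ℕ) : ℝ :=
  ∑ m ∈ Finset.range n, 1 / ((m : ℝ) + 1) ^ 3 +
  ∑ m ∈ Finset.range k, (-1) ^ m / (2 * ((m : ℝ) + 1) ^ 3 * t n (m + 1))

lemma c_succ_right (n k : ℕ) :
    c n (k + 1) = c n k + (-1) ^ k / (2 * ((k : ℝ) + 1) ^ 3 * t n (k + 1)) := by
  unfold c; rw [Finset.sum_range_succ _ k]; ring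

lemma c_diff (n k : ℕ) (hk : k ≤ n) :
    (c (n + 1) k - c n k) * t n k = (-1) ^ k / (((n : ℝ) + 1) ^ 2 * (n + 1 + k)) := by
  induction k with
  | zero =>
    simp [c, Finset.sum_range_succ, t_zero_right]
    field_simp
  | succ k ih =>
    have ih := ih (by omega)
    rw [c_succ_right, c_succ_right]
    have p1 := t_pos (show k ≤ n by omega)
    have p2 := t_pos (show k + 1 ≤ n by omega)
    have p3 := t_pos (show k + 1 ≤ n + 1 by omega)
    have e1 := t_E1 n (k + 1)
    have e2 := t_E2 n k
    have hnk : (0 : ℝ) < n - k := by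
      have : ((k + 1 : ℕ) : ℝ) ≤ n := by exact_mod_cast hk
      push_cast at this; linarith
    have hD : c (n + 1) k - c n k = (-1) ^ k / (((n : ℝ) + 1) ^ 2 * (n + 1 + k)) / t n k := by
      rw [← ih]; field_simp
    have h0 : t n k = t n (k + 1) * ((k : ℝ) + 1) ^ 2 / (((n : ℝ) - k) * (n + k + 1)) := by
      rw [e2]; field_simp
    have h1 : t (n + 1) (k + 1) = (n + 2 + k) * t n (k + 1) / ((n : ℝ) - k) := by
      push_cast at e1
      rw [eq_div_iff hnk.ne']
      linear_combination e1
    have : (c (n + 1) k + (-1) ^ k / (2 * ((k : ℝ) + 1) ^ 3 * t (n + 1) (k + 1)) -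
        (c n k + (-1) ^ k / (2 * ((k : ℝ) + 1) ^ 3 * t n (k + 1)))) =
        (c (n + 1) k - c n k) + ((-1) ^ k / (2 * ((k : ℝ) + 1) ^ 3 * t (n + 1) (k + 1)) -
         (-1) ^ k / (2 * ((k : ℝ) + 1) ^ 3 * t n (k + 1))) := by ring
    rw [this, hD, h0, h1, pow_succ]
    push_cast
    have q1 : (0 : ℝ) < n + 1 + k := by positivity
    have q2 : (0 : ℝ) < n + k + 1 := by positivity
    have q3 : (0 : ℝ) < n + 2 + k := by positivity
    have q4 : (0 : ℝ) < n + 1 + (k + 1) := by positivity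
    field_simp
    ring

lemma L1 (n k : ℕ) :
    t n k ^ 2 * (c (n + 1) k - c n k) = t n k * ((-1) ^ k / (((n : ℝ) + 1) ^ 2 * (n + 1 + k))) := by
  rcases le_or_gt k n with hk | hk
  · rw [← c_diff n k hk]; ring
  · rw [t_eq_zero hk]; ring

lemma L2 (n k : ℕ) :
    t n (k + 1) ^ 2 * (c n (k + 1) - c n k) = t n (k + 1) * ((-1) ^ k / (2 * ((k : ℝ) + 1) ^ 3)) := by
  rcases le_or_gt (k + 1) n with hk | hk
  · have := t_pos hk
    rw [c_succ_right]; field_simp; ring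
  · rw [t_eq_zero hk]; ring

/-- the polynomial at index `n+1` -/
noncomputable def P (n : ℕ) : ℝ := 34 * ((n : ℝ) + 1) ^ 3 + 51 * ((n : ℝ) + 1) ^ 2 + 27 * ((n : ℝ) + 1) + 5

/-- certificate at index `n+1` -/
noncomputable def U (n k : ℕ) : ℝ :=
  4 * (2 * (n : ℝ) + 3) * (k * (2 * k + 1) - (2 * (n : ℝ) + 3) ^ 2) * t (n + 1) k ^ 2

noncomputable def V (n k : ℕ) : ℝ :=
  U n k * c (n + 1) k - 5 * (2 * (n : ℝ) + 3) * (-1) ^ k * k / ((n + 1) * (n + 2)) * t (n + 1) k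

lemma cert_U (n k : ℕ) :
    ((n : ℝ) + 2) ^ 3 * t (n + 2) (k + 1) ^ 2 - P n * t (n + 1) (k + 1) ^ 2
      + ((n : ℝ) + 1) ^ 3 * t n (k + 1) ^ 2 = U n (k + 1) - U n k := by
  obtain ⟨s, h1, h2, h3, h4⟩ := t_basis n k
  unfold U P
  rw [h1, h2, h3, h4]
  push_cast
  ring

lemma cert_V (n k : ℕ) :
    ((n : ℝ) + 2) ^ 3 * t (n + 2) (k + 1) ^ 2 * c (n + 2) (k + 1)
      - P n * t (n + 1) (k + 1) ^ 2 * c (n + 1) (k + 1)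
      + ((n : ℝ) + 1) ^ 3 * t n (k + 1) ^ 2 * c n (k + 1) = V n (k + 1) - V n k := by
  have hU := cert_U n k
  have l1 := L1 (n + 1) (k + 1)
  have l2 := L1 n (k + 1)
  have l3 := L2 (n + 2) k
  have l4 := L1 (n + 1) k
  obtain ⟨s, h1, h2, h3, h4⟩ := t_basis n k
  have hq2 : (0 : ℝ) < n + k + 2 := by positivity
  have hq3 : (0 : ℝ) < n + k + 3 := by positivity
  have hn1 : (0 : ℝ) < n + 1 := by positivity
  have hn2 : (0 : ℝ) < n + 2 := by positivity
  have hk1 : (0 : ℝ) < k + 1 := by positivity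
  unfold V
  unfold U P at *
  simp only [show n + 1 + 1 = n + 2 from rfl] at *
  rw [h1] at l3
  rw [h2] at l1
  rw [h3] at l2
  rw [h4] at l4
  rw [h1, h2, h3, h4] at hU
  rw [h1, h2, h3, h4]
  push_cast at *
  generalize c (n + 2) (k + 1) = c1 at *
  generalize c (n + 1) (k + 1) = x at *
  generalize c n (k + 1) = y at *
  generalize c (n + 1) k = z at *
  generalize c (n + 2) k = w at *
  rw [show ((n : ℝ) + 1 + 1) = n + 2 by ring, show ((n : ℝ) + 2 + (k + 1)) = n + k + 3 by ring] at l1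
  rw [show ((n : ℝ) + 1 + (k + 1)) = n + k + 2 by ring] at l2
  rw [show ((n : ℝ) + 1 + 1) = n + 2 by ring, show ((n : ℝ) + 2 + k) = n + k + 2 by ring] at l4
  have m1 : s ^ 2 * ((n : ℝ) + 1 - k) ^ 2 * (c1 - x)
      = s * (n + 1 - k) * (-1) ^ (k + 1) / ((n + k + 2) * ((n + 2) ^ 2 * (n + k + 3))) := by
    have : (s ^ 2 * ((n : ℝ) + 1 - k) ^ 2 * (c1 - x)) * (n + k + 2) ^ 2
        = (s * (n + 1 - k) * (-1) ^ (k + 1) / ((n + k + 2) * ((n + 2) ^ 2 * (n + k + 3)))) * (n + k + 2) ^ 2 := by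
      have : (s ^ 2 * ((n : ℝ) + 1 - k) ^ 2 * (c1 - x)) * (n + k + 2) ^ 2 = (s * (n + k + 2) * (n + 1 - k)) ^ 2 * (c1 - x) := by ring
      rw [this, l1]
      field_simp
    exact mul_right_cancel₀ (by positivity) this
  have m3 : s ^ 2 * (c1 - w) = s * (-1) ^ k / (2 * (k + 1) ^ 3 * (n + k + 2) * (n + k + 3)) := by
    have : (s ^ 2 * (c1 - w)) * ((n + k + 2) * (n + k + 3)) ^ 2
      = (s * (-1) ^ k / (2 * (k + 1) ^ 3 * (n + k + 2) * (n + k + 3))) * ((n + k + 2) * (n + k + 3)) ^ 2 := by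
      have : (s ^ 2 * (c1 - w)) * ((n + k + 2) * (n + k + 3)) ^ 2 = (s * (n + k + 2) * (n + k + 3)) ^ 2 * (c1 - w) := by ring
      rw [this, l3]
      field_simp
    exact mul_right_cancel₀ (by positivity) this
  have key : (34 * ((n : ℝ) + 1) ^ 3 + 51 * ((n : ℝ) + 1) ^ 2 + 27 * ((n : ℝ) + 1) + 5) * (n + k + 2) ^ 2 * (s * (n + 1 - k) * (-1) ^ (k + 1) / ((n + k + 2) * ((n + 2) ^ 2 * (n + k + 3))))
      - ((n : ℝ) + 1) ^ 3 * (n - k) ^ 2 * (s * (n + 1 - k) * (-1) ^ (k + 1) / ((n + k + 2) * ((n + 2) ^ 2 * (n + k + 3))))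
      - ((n : ℝ) + 1) ^ 3 * (s * (n + 1 - k) * (n - k) * ((-1) ^ (k + 1) / ((n + 1) ^ 2 * (n + k + 2))))
      + 4 * (2 * (n : ℝ) + 3) * ((k + 1) * (2 * (k + 1) + 1) - (2 * (n : ℝ) + 3) ^ 2) * (n + k + 2) ^ 2 * (s * (n + 1 - k) * (-1) ^ (k + 1) / ((n + k + 2) * ((n + 2) ^ 2 * (n + k + 3))))
      - 4 * (2 * (n : ℝ) + 3) * (k * (2 * k + 1) - (2 * (n : ℝ) + 3) ^ 2) * ((k + 1) ^ 4 * (s * (-1) ^ k / (2 * (k + 1) ^ 3 * (n + k + 2) * (n + k + 3)))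
         + s * (k + 1) ^ 2 * ((-1) ^ k / ((n + 2) ^ 2 * (n + k + 2))))
      + 5 * (2 * (n : ℝ) + 3) * (-1) ^ (k + 1) * (k + 1) / ((n + 1) * (n + 2)) * (s * (n + k + 2) * (n + 1 - k))
      - 5 * (2 * (n : ℝ) + 3) * (-1) ^ k * k / ((n + 1) * (n + 2)) * (s * (k + 1) ^ 2) = 0 := by
    rw [pow_succ (-1 : ℝ) k]
    field_simp
    ring
  linear_combination key + c1 * hU + ((34 * ((n : ℝ) + 1) ^ 3 + 51 * ((n : ℝ) + 1) ^ 2 + 27 * ((n : ℝ) + 1) + 5) * (n + k + 2) ^ 2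
     - ((n : ℝ) + 1) ^ 3 * (n - k) ^ 2 + 4 * (2 * (n : ℝ) + 3) * ((k + 1) * (2 * (k + 1) + 1) - (2 * (n : ℝ) + 3) ^ 2) * (n + k + 2) ^ 2) * m1
     - ((n : ℝ) + 1) ^ 3 * l2 - 4 * (2 * (n : ℝ) + 3) * (k * (2 * k + 1) - (2 * (n : ℝ) + 3) ^ 2) * ((k + 1) ^ 4 * m3 + l4)

noncomputable def A (n : ℕ) : ℝ := ∑ k ∈ Finset.range (n + 1), t n k ^ 2
noncomputable def B (n : ℕ) : ℝ := ∑ k ∈ Finset.range (n + 1), t n k ^ 2 * c n k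

lemma A_ext (n j : ℕ) : A n = ∑ k ∈ Finset.range (n + 1 + j), t n k ^ 2 := by
  induction j with
  | zero => rfl
  | succ j ih => rw [← add_assoc, Finset.sum_range_succ, ← ih, t_eq_zero (by omega)]; simp

lemma B_ext (n j : ℕ) : B n = ∑ k ∈ Finset.range (n + 1 + j), t n k ^ 2 * c n k := by
  induction j with
  | zero => rfl
  | succ j ih => rw [← add_assoc, Finset.sum_range_succ, ← ih, t_eq_zero (by omega)]; simp

lemma A_rec (n : ℕ) :
    ((n : ℝ) + 2) ^ 3 * A (n + 2) - P n * A (n + 1) + ((n : ℝ) + 1) ^ 3 * A n = 0 := by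
  have key : ∀ K : ℕ, ∑ k ∈ Finset.range (K + 1), (((n : ℝ) + 2) ^ 3 * t (n + 2) k ^ 2
      - P n * t (n + 1) k ^ 2 + ((n : ℝ) + 1) ^ 3 * t n k ^ 2) = U n K := by
    intro K
    induction K with
    | zero => simp [t_zero_right, U, P]; ring
    | succ K ih => rw [Finset.sum_range_succ, ih, cert_U]; ring
  have := key (n + 2)
  rw [Finset.sum_add_distrib, Finset.sum_sub_distrib, ← Finset.mul_sum, ← Finset.mul_sum,
    ← Finset.mul_sum] at this
  rw [A_ext (n + 2) 0, A_ext (n + 1) 1, A_ext n 2]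
  refine this.trans ?_
  rw [U, t_eq_zero (by omega)]; simp

lemma B_rec (n : ℕ) :
    ((n : ℝ) + 2) ^ 3 * B (n + 2) - P n * B (n + 1) + ((n : ℝ) + 1) ^ 3 * B n = 0 := by
  have key : ∀ K : ℕ, ∑ k ∈ Finset.range (K + 1), (((n : ℝ) + 2) ^ 3 * (t (n + 2) k ^ 2 * c (n + 2) k)
      - P n * (t (n + 1) k ^ 2 * c (n + 1) k) + ((n : ℝ) + 1) ^ 3 * (t n k ^ 2 * c n k)) = V n K := by
    intro K
    induction K with
    | zero =>
      simp [t_zero_right, V, U, P, c, Finset.sum_range_succ]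
      field_simp
      ring
    | succ K ih => rw [Finset.sum_range_succ, ih]; linear_combination cert_V n K
  have := key (n + 2)
  rw [Finset.sum_add_distrib, Finset.sum_sub_distrib, ← Finset.mul_sum, ← Finset.mul_sum,
    ← Finset.mul_sum] at this
  rw [B_ext (n + 2) 0, B_ext (n + 1) 1, B_ext n 2]
  refine this.trans ?_
  rw [V, U, t_eq_zero (by omega)]; simp

lemma casoratian (n : ℕ) : B (n + 1) * A n - A (n + 1) * B n = 6 / ((n : ℝ) + 1) ^ 3 := by
  induction n with
  | zero => simp [A, B, c, t, Finset.sum_range_succ]; norm_num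
  | succ n ih =>
    have h1 := A_rec n
    have h2 := B_rec n
    have hn1 : (0 : ℝ) < n + 1 := by positivity
    have hn2 : (0 : ℝ) < n + 2 := by positivity
    rw [eq_div_iff (by positivity)] at ih
    push_cast
    rw [eq_div_iff (by positivity)]
    linear_combination ih + A (n + 1) * h2 - B (n + 1) * h1

end Apery
namespace Apery
open Filter Topology

lemma t_nonneg (n k : ℕ) : 0 ≤ t n k := by unfold t; positivity

lemma t_mono (n k : ℕ) : t n k ≤ t (n + 1) k := by
  unfold t
  have h1 : n.choose k ≤ (n + 1).choose k := Nat.choose_le_choose k (by omega)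
  have h2 : (n + k).choose k ≤ (n + 1 + k).choose k := Nat.choose_le_choose k (by omega)
  gcongr

lemma A_mono (n : ℕ) : A n ≤ A (n + 1) := by
  rw [A_ext n 1, A_ext (n + 1) 0]
  refine Finset.sum_le_sum fun k _ => ?_
  have := t_nonneg n k
  have := t_mono n k
  gcongr

lemma A_zero : A 0 = 1 := by simp [A, t]
lemma A_one : A 1 = 5 := by simp [A, t, Finset.sum_range_succ]; norm_num

lemma A_pos (n : ℕ) : 0 < A n := by
  have : Monotone A := monotone_nat_of_le_succ A_mono
  have := this (Nat.zero_le n)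
  rw [A_zero] at this
  linarith

lemma A_two (n : ℕ) : 2 * A n ≤ A (n + 1) := by
  cases n with
  | zero => rw [A_zero, A_one]; norm_num
  | succ n =>
    have h := A_rec n
    have hm := A_mono n
    have hp := A_pos (n + 1)
    unfold P at h
    have hn : (0 : ℝ) ≤ n := by positivity
    have h1 : ((n : ℝ) + 1) ^ 3 * A n ≤ ((n : ℝ) + 1) ^ 3 * A (n + 1) := by gcongr
    have h2 : ((n : ℝ) + 2) ^ 3 * (2 * A (n + 1)) ≤ ((n : ℝ) + 2) ^ 3 * A (n + 2) := by
      have h3 : 0 ≤ (33 * ((n : ℝ) + 1) ^ 3 + 51 * ((n : ℝ) + 1) ^ 2 + 27 * ((n : ℝ) + 1) + 5 - 2 * ((n : ℝ) + 2) ^ 3) * A (n + 1) := by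
        apply mul_nonneg _ hp.le
        ring_nf
        positivity
      linarith
    exact le_of_mul_le_mul_left h2 (by positivity)

lemma A_32 (n : ℕ) (h100 : 100 ≤ n) : 32 * A (n + 1) ≤ A (n + 2) := by
  have h := A_rec n
  have hm := A_mono n
  have hp := A_pos (n + 1)
  unfold P at h
  obtain ⟨m, rfl⟩ := Nat.exists_eq_add_of_le h100
  have h1 : (((100 + m : ℕ) : ℝ) + 1) ^ 3 * A (100 + m) ≤ (((100 + m : ℕ) : ℝ) + 1) ^ 3 * A (100 + m + 1) := by gcongr
  generalize A (100 + m + 1) = a1 at *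
  generalize A (100 + m + 2) = a2 at *
  generalize A (100 + m) = a0 at *
  push_cast at *
  have h2 : (100 + (m : ℝ) + 2) ^ 3 * (32 * a1) ≤ (100 + (m : ℝ) + 2) ^ 3 * a2 := by
    have h3 : 0 ≤ (33 * (100 + (m : ℝ) + 1) ^ 3 + 51 * (100 + (m : ℝ) + 1) ^ 2 + 27 * (100 + (m : ℝ) + 1) + 5 - 32 * (100 + (m : ℝ) + 2) ^ 3) * a1 := by
      apply mul_nonneg _ hp.le
      ring_nf
      positivity
    linarith
  exact le_of_mul_le_mul_left h2 (by positivity)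

lemma A_33 (n : ℕ) (h100 : 101 ≤ n) : 33 * A (n + 1) ≤ A (n + 2) := by
  have h := A_rec n
  have hp := A_pos (n + 1)
  unfold P at h
  obtain ⟨m, rfl⟩ := Nat.exists_eq_add_of_le h100
  have hm : 32 * A (101 + m) ≤ A (101 + m + 1) := by
    have := A_32 (100 + m) (by omega)
    rwa [show 100 + m + 1 = 101 + m by ring, show 100 + m + 2 = 101 + m + 1 by ring] at this
  have h1 : (((101 + m : ℕ) : ℝ) + 1) ^ 3 * (32 * A (101 + m)) ≤ (((101 + m : ℕ) : ℝ) + 1) ^ 3 * A (101 + m + 1) := by gcongr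
  generalize A (101 + m + 1) = a1 at *
  generalize A (101 + m + 2) = a2 at *
  generalize A (101 + m) = a0 at *
  push_cast at *
  have h2 : (101 + (m : ℝ) + 2) ^ 3 * (33 * a1) ≤ (101 + (m : ℝ) + 2) ^ 3 * a2 := by
    have h3 : 0 ≤ ((34 - 1 / 32) * (101 + (m : ℝ) + 1) ^ 3 + 51 * (101 + (m : ℝ) + 1) ^ 2 + 27 * (101 + (m : ℝ) + 1) + 5 - 33 * (101 + (m : ℝ) + 2) ^ 3) * a1 := by
      apply mul_nonneg _ hp.le
      ring_nf
      positivity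
    linarith
  exact le_of_mul_le_mul_left h2 (by positivity)

lemma A_growth (n : ℕ) : (33 : ℝ) ^ n ≤ 33 ^ 102 * A n := by
  rcases le_or_gt n 102 with h | h
  · have h1 : (33 : ℝ) ^ n ≤ 33 ^ 102 := pow_le_pow_right₀ (by norm_num) h
    have : Monotone A := monotone_nat_of_le_succ A_mono
    have := this (Nat.zero_le n)
    rw [A_zero] at this
    have h3 : (0 : ℝ) < 33 ^ 102 := by positivity
    nlinarith
  · obtain ⟨m, rfl⟩ := Nat.exists_eq_add_of_lt h
    clear h
    have key : ∀ m : ℕ, (33 : ℝ) ^ m ≤ A (102 + m) := by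
      intro m
      induction m with
      | zero =>
        have : Monotone A := monotone_nat_of_le_succ A_mono
        have := this (Nat.zero_le 102)
        rw [A_zero] at this
        simpa using this
      | succ m ih =>
        have := A_33 (101 + m) (by omega)
        rw [show 101 + m + 1 = 102 + m by ring, show 101 + m + 2 = 102 + (m + 1) by ring] at this
        rw [pow_succ]
        linarith
    have := key (m + 1)
    rw [add_assoc, pow_add]
    gcongr

noncomputable def Z : ℝ := ∑' m : ℕ, 1 / ((m : ℝ) + 1) ^ 3

lemma summable_Z : Summable fun m : ℕ => 1 / ((m : ℝ) + 1) ^ 3 := by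
  have := (summable_nat_add_iff 1).2 (Real.summable_one_div_nat_pow.2 (show 1 < 3 by norm_num))
  simpa using this

noncomputable def H (n : ℕ) : ℝ := ∑ m ∈ Finset.range n, 1 / ((m : ℝ) + 1) ^ 3

lemma H_le (n : ℕ) : H n ≤ Z := summable_Z.sum_le_tsum _ (fun _ _ => by positivity)

lemma t_lower {n m : ℕ} (h : m + 1 ≤ n) : (n : ℝ) + 1 ≤ t n (m + 1) := by
  unfold t
  have h1 : 1 ≤ n.choose (m + 1) := Nat.choose_pos h
  have h2 : n + 1 ≤ (n + (m + 1)).choose (m + 1) := by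
    have := Nat.choose_le_choose n (show n + 1 ≤ n + (m + 1) by omega)
    rw [Nat.choose_succ_self_right] at this
    rwa [Nat.choose_symm_add] at this
  have h1' : (1 : ℝ) ≤ n.choose (m + 1) := by exact_mod_cast h1
  have h2' : (n : ℝ) + 1 ≤ (n + (m + 1)).choose (m + 1) := by exact_mod_cast h2
  nlinarith

lemma c_close {n k : ℕ} (h : k ≤ n) : |c n k - H n| ≤ Z / (n + 1) := by
  have : c n k - H n = ∑ m ∈ Finset.range k, (-1) ^ m / (2 * ((m : ℝ) + 1) ^ 3 * t n (m + 1)) := by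
    unfold c H; ring
  rw [this]
  refine (Finset.abs_sum_le_sum_abs _ _).trans ?_
  have : ∀ m ∈ Finset.range k, |(-1) ^ m / (2 * ((m : ℝ) + 1) ^ 3 * t n (m + 1))|
      ≤ 1 / ((m : ℝ) + 1) ^ 3 / (n + 1) := by
    intro m hm
    have hm' := Finset.mem_range.1 hm
    have ht := t_lower (show m + 1 ≤ n by omega)
    have hn : (0 : ℝ) < n + 1 := by positivity
    have ht0 : 0 < t n (m + 1) := by linarith
    rw [abs_div, abs_pow, abs_neg, abs_one, one_pow, abs_of_pos (by positivity), div_div]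
    apply one_div_le_one_div_of_le (by positivity)
    have : ((m : ℝ) + 1) ^ 3 * (n + 1) ≤ ((m : ℝ) + 1) ^ 3 * t n (m + 1) := by gcongr
    have : 0 < ((m : ℝ) + 1) ^ 3 * t n (m + 1) := by positivity
    linarith
  refine (Finset.sum_le_sum this).trans ?_
  rw [← Finset.sum_div]
  gcongr
  exact H_le k

lemma x_close (n : ℕ) : |B n / A n - H n| ≤ Z / (n + 1) := by
  have hA := A_pos n
  have : B n / A n - H n = (∑ k ∈ Finset.range (n + 1), t n k ^ 2 * (c n k - H n)) / A n := by
    simp only [mul_sub]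
    rw [Finset.sum_sub_distrib, ← Finset.sum_mul]
    change _ = (B n - A n * H n) / A n
    field_simp
  rw [this, abs_div, abs_of_pos hA, div_le_iff₀ hA]
  refine (Finset.abs_sum_le_sum_abs _ _).trans ?_
  rw [A, Finset.mul_sum]
  refine Finset.sum_le_sum fun k hk => ?_
  have hk' := Finset.mem_range.1 hk
  have := c_close (show k ≤ n by omega)
  rw [abs_mul, abs_of_nonneg (sq_nonneg (t n k)), mul_comm]
  gcongr

lemma x_tendsto : Tendsto (fun n => B n / A n) atTop (𝓝 Z) := by
  have h1 : Tendsto H atTop (𝓝 Z) := summable_Z.hasSum.tendsto_sum_nat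
  have h2 : Tendsto (fun n : ℕ => Z / ((n : ℝ) + 1)) atTop (𝓝 0) := by
    have := (tendsto_one_div_add_atTop_nhds_zero_nat (𝕜 := ℝ)).const_mul Z
    simpa [div_eq_mul_inv] using this
  have h3 : Tendsto (fun n => B n / A n - H n) atTop (𝓝 0) :=
    squeeze_zero_norm (fun n => by simpa using x_close n) h2
  simpa using h3.add h1

lemma x_step (n : ℕ) : B (n + 1) / A (n + 1) - B n / A n = 6 / ((n : ℝ) + 1) ^ 3 / (A n * A (n + 1)) := by
  rw [← casoratian n]
  have := A_pos n
  have := A_pos (n + 1)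
  field_simp

lemma form_pos (n : ℕ) : 0 < A n * Z - B n := by
  have hA := A_pos n
  have hstep : ∀ n, B n / A n < B (n + 1) / A (n + 1) := by
    intro n
    have := x_step n
    have h1 := A_pos n
    have h2 := A_pos (n + 1)
    have : 0 < 6 / ((n : ℝ) + 1) ^ 3 / (A n * A (n + 1)) := by positivity
    linarith
  have hm : StrictMono (fun n => B n / A n) := strictMono_nat_of_lt_succ hstep
  have h1 : B (n + 1) / A (n + 1) ≤ Z := hm.monotone.ge_of_tendsto x_tendsto (n + 1)
  have h2 := (hstep n).trans_le h1
  rw [div_lt_iff₀ hA] at h2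
  linarith

lemma form_le (n : ℕ) : A n * Z - B n ≤ 6 / A n := by
  have hA := A_pos n
  have hmono : Monotone A := monotone_nat_of_le_succ A_mono
  have hanti : Antitone (fun j => B (n + j) / A (n + j) + 6 / A n * (1 / A (n + j))) := by
    refine antitone_nat_of_succ_le fun j => ?_
    have hs := x_step (n + j)
    have h1 := A_pos (n + j)
    have h2 := A_pos (n + j + 1)
    have h3 := A_two (n + j)
    have h4 := hmono (show n ≤ n + j by omega)
    rw [← add_assoc]
    have h5 : 6 / (((n + j : ℕ) : ℝ) + 1) ^ 3 / (A (n + j) * A (n + j + 1)) ≤ 6 / (A (n + j) * A (n + j + 1)) := by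
      gcongr
      apply div_le_self (by norm_num)
      apply one_le_pow₀
      have : (0 : ℝ) ≤ ((n + j : ℕ) : ℝ) := by positivity
      linarith
    have h6 : 6 / (A (n + j) * A (n + j + 1)) ≤ 6 / A n * (1 / A (n + j)) - 6 / A n * (1 / A (n + j + 1)) := by
      have : 6 / A n * (1 / A (n + j)) - 6 / A n * (1 / A (n + j + 1)) = 6 / (A (n + j) * A (n + j + 1)) * ((A (n + j + 1) - A (n + j)) / A n) := by
        field_simp
      rw [this]
      apply le_mul_of_one_le_right (by positivity)
      rw [le_div_iff₀ hA]
      linarith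
    linarith
  have hlim : Tendsto (fun j => B (n + j) / A (n + j) + 6 / A n * (1 / A (n + j))) atTop (𝓝 (Z + 6 / A n * 0)) := by
    have e : Tendsto (fun j : ℕ => n + j) atTop atTop := tendsto_atTop_mono (fun j => by simp) tendsto_id
    refine (x_tendsto.comp e).add (Tendsto.const_mul _ ?_)
    have h1 : Tendsto (fun j : ℕ => ((1 : ℝ) / 33) ^ j * 33 ^ 102) atTop (𝓝 (0 * 33 ^ 102)) :=
      (tendsto_pow_atTop_nhds_zero_of_lt_one (by norm_num) (by norm_num)).mul_const _
    rw [zero_mul] at h1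
    have h2 : Tendsto (fun j : ℕ => 1 / A j) atTop (𝓝 0) := by
      refine squeeze_zero (fun j => (one_div_pos.2 (A_pos j)).le) (fun j => ?_) h1
      have := A_growth j
      have hp := A_pos j
      rw [div_pow, one_pow, div_le_iff₀ hp, div_mul_eq_mul_div, div_mul_eq_mul_div, le_div_iff₀ (by positivity)]
      linarith
    exact h2.comp e
  have := hanti.le_of_tendsto hlim 0
  simp only [add_zero, mul_zero] at this
  have h7 : A n * Z ≤ A n * (B n / A n + 6 / A n * (1 / A n)) := by gcongr
  have h8 : A n * (B n / A n + 6 / A n * (1 / A n)) = B n + 6 / A n := by field_simp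
  linarith

end Apery
namespace Apery
open Filter Topology

/-- the subring of integers inside `ℝ` -/
noncomputable def S : Subring ℝ := (Int.castRingHom ℝ).range

lemma nat_mem_S (n : ℕ) : (n : ℝ) ∈ S := natCast_mem S n

lemma div_mem_S {a b : ℕ} (h : a ∣ b) (ha : a ≠ 0) : (b : ℝ) / a ∈ S := by
  obtain ⟨c, rfl⟩ := h
  have : (a : ℝ) ≠ 0 := by exact_mod_cast ha
  rw [Nat.cast_mul, mul_div_cancel_left₀ _ this]
  exact nat_mem_S c

noncomputable abbrev d (n : ℕ) : ℕ := Nat.lcmUpto n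

lemma dvd_d {m n : ℕ} (h1 : 1 ≤ m) (h2 : m ≤ n) : m ∣ d n :=
  Finset.dvd_lcm (f := id) (Finset.mem_Icc.2 ⟨h1, h2⟩)

lemma d_dvd {m n : ℕ} (h : m ≤ n) : d m ∣ d n :=
  Finset.lcm_dvd fun b hb => dvd_d (Finset.mem_Icc.1 hb).1 ((Finset.mem_Icc.1 hb).2.trans h)

lemma mul_d_div {m n : ℕ} (h : m ≤ n) {x : ℝ} (hx : (d m : ℝ) / x ∈ S) : (d n : ℝ) / x ∈ S := by
  obtain ⟨e, he⟩ := d_dvd h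
  rw [he, Nat.cast_mul, mul_comm, mul_div_assoc]
  exact S.mul_mem (nat_mem_S e) hx

lemma leibniz (m : ℕ) : ∀ n, m + 1 ≤ n → (d n : ℝ) / ((m + 1) * n.choose (m + 1)) ∈ S := by
  induction m with
  | zero =>
    intro n hn
    simpa using div_mem_S (dvd_d hn le_rfl) (by omega)
  | succ m ih =>
    intro n hn
    obtain ⟨n, rfl⟩ : ∃ n', n = n' + 1 := ⟨n - 1, by omega⟩
    have i1 := mul_d_div (Nat.le_succ n) (ih n (by omega))
    have i2 := ih (n + 1) (by omega)
    have h1 := Nat.add_one_mul_choose_eq n (m + 1)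
    have h2 := Nat.choose_mul_succ_eq n (m + 1)
    have e1 : ((n : ℝ) + 1) * n.choose (m + 1) = (n + 1).choose (m + 2) * (m + 2) := by
      have := congrArg (Nat.cast : ℕ → ℝ) h1
      push_cast at this
      linear_combination this
    have e2 : (n.choose (m + 1) : ℝ) * (n + 1) = (n + 1).choose (m + 1) * (n - m) := by
      have := congrArg (Nat.cast : ℕ → ℝ) h2
      rw [Nat.cast_mul, Nat.cast_mul, Nat.cast_sub (by omega)] at this
      push_cast at this
      linear_combination this
    have p1 : (0 : ℝ) < n.choose (m + 1) := by exact_mod_cast Nat.choose_pos (by omega)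
    have p2 : (0 : ℝ) < (n + 1).choose (m + 1) := by exact_mod_cast Nat.choose_pos (by omega)
    have p3 : (0 : ℝ) < n - m := by
      have : ((m + 1 : ℕ) : ℝ) ≤ n := by exact_mod_cast (show m + 1 ≤ n by omega)
      push_cast at this
      linarith
    have key : (d (n + 1) : ℝ) / (((m + 1 : ℕ) + 1) * (n + 1).choose (m + 1 + 1))
        = (d (n + 1) : ℝ) / ((m + 1) * n.choose (m + 1)) - (d (n + 1) : ℝ) / ((m + 1) * (n + 1).choose (m + 1)) := by
      have q1 : (((m + 1 : ℕ) : ℝ) + 1) * (n + 1).choose (m + 1 + 1) = ((n : ℝ) + 1) * n.choose (m + 1) := by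
        push_cast
        linear_combination -e1
      have q2 : ((n + 1).choose (m + 1) : ℝ) = n.choose (m + 1) * (n + 1) / (n - m) := by
        rw [e2]; field_simp
      rw [q1, q2]
      field_simp
      ring
    rw [key]
    exact S.sub_mem i1 i2

lemma term_mem (n k m : ℕ) (hk : k ≤ n) (hm : m + 1 ≤ k) :
    (d n : ℝ) ^ 3 * t n k ^ 2 / (((m : ℝ) + 1) ^ 3 * t n (m + 1)) ∈ S := by
  have i1 := leibniz m n (by omega)
  have i2 := mul_d_div hk (leibniz m k hm)
  have i3 : (d n : ℝ) / ((m + 1 : ℕ) : ℝ) ∈ S := div_mem_S (dvd_d (by omega) (by omega)) (by omega)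
  have h := Nat.choose_mul (n := n + k) (k := n + (m + 1)) (s := n) (by omega)
  rw [Nat.add_sub_cancel_left, Nat.add_sub_cancel_left, Nat.choose_symm_add, Nat.choose_symm_add] at h
  have h' : ((n + k).choose (n + (m + 1)) : ℝ) * (n + (m + 1)).choose (m + 1) = (n + k).choose k * k.choose (m + 1) := by
    exact_mod_cast h
  have p1 : (0 : ℝ) < k.choose (m + 1) := by exact_mod_cast Nat.choose_pos hm
  have p2 : (0 : ℝ) < n.choose (m + 1) := by exact_mod_cast Nat.choose_pos (by omega)
  have p3 : (0 : ℝ) < (n + (m + 1)).choose (m + 1) := by exact_mod_cast Nat.choose_pos (by omega)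
  have key : (d n : ℝ) ^ 3 * t n k ^ 2 / (((m : ℝ) + 1) ^ 3 * t n (m + 1))
      = ((n.choose k ^ 2 * (n + k).choose k * (n + k).choose (n + (m + 1)) : ℕ) : ℝ)
        * ((d n : ℝ) / ((m + 1 : ℕ) : ℝ)) * ((d n : ℝ) / ((m + 1) * n.choose (m + 1)))
        * ((d n : ℝ) / ((m + 1) * k.choose (m + 1))) := by
    have q : ((n + k).choose (n + (m + 1)) : ℝ) = (n + k).choose k * k.choose (m + 1) / (n + (m + 1)).choose (m + 1) := by
      rw [← h']; field_simp
    push_cast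
    rw [q]
    unfold t
    field_simp
  rw [key]
  exact S.mul_mem (S.mul_mem (S.mul_mem (nat_mem_S _) i3) i1) i2

lemma t_mem (n k : ℕ) : t n k ∈ S := S.mul_mem (nat_mem_S _) (nat_mem_S _)

lemma A_mem (n : ℕ) : A n ∈ S := S.sum_mem fun k _ => S.pow_mem (t_mem n k) 2

lemma B_mem (n : ℕ) : 2 * (d n : ℝ) ^ 3 * B n ∈ S := by
  unfold B
  rw [Finset.mul_sum]
  refine S.sum_mem fun k hk => ?_
  have hk' : k ≤ n := by have := Finset.mem_range.1 hk; omega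
  have : 2 * (d n : ℝ) ^ 3 * (t n k ^ 2 * c n k) =
      2 * t n k ^ 2 * ∑ m ∈ Finset.range n, ((d n : ℝ) / ((m + 1 : ℕ) : ℝ)) ^ 3 +
      ∑ m ∈ Finset.range k, (-1) ^ m * ((d n : ℝ) ^ 3 * t n k ^ 2 / (((m : ℝ) + 1) ^ 3 * t n (m + 1))) := by
    unfold c
    rw [mul_add, mul_add]
    congr 1
    · rw [Finset.mul_sum, Finset.mul_sum, Finset.mul_sum]
      refine Finset.sum_congr rfl fun m _ => ?_
      push_cast
      field_simp
    · rw [Finset.mul_sum, Finset.mul_sum]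
      refine Finset.sum_congr rfl fun m hm => ?_
      have hm' := Finset.mem_range.1 hm
      have := t_pos (show m + 1 ≤ n by omega)
      field_simp
  rw [this]
  refine S.add_mem (S.mul_mem (S.mul_mem (by exact_mod_cast nat_mem_S 2) (S.pow_mem (t_mem n k) 2)) (S.sum_mem fun m hm => ?_)) (S.sum_mem fun m hm => ?_)
  · have hm' := Finset.mem_range.1 hm
    exact S.pow_mem (div_mem_S (dvd_d (by omega) (by omega)) (by omega)) 3
  · have hm' := Finset.mem_range.1 hm
    exact S.mul_mem (S.pow_mem (S.neg_mem S.one_mem) m) (term_mem n k m hk' (by omega))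

end Apery
namespace Apery
open Filter Topology

/-- the multinomial coefficient `(42k)! / ((21k)! (14k)! (6k)! k!)` -/
def M (k : ℕ) : ℕ := (42 * k).choose (21 * k) * (21 * k).choose (14 * k) * (7 * k).choose (6 * k)

lemma M_pos (k : ℕ) : 0 < M k := by
  unfold M
  have h1 : 0 < (42 * k).choose (21 * k) := Nat.choose_pos (by omega)
  have h2 : 0 < (21 * k).choose (14 * k) := Nat.choose_pos (by omega)
  have h3 : 0 < (7 * k).choose (6 * k) := Nat.choose_pos (by omega)
  positivity

lemma M_spec (k : ℕ) : M k * ((21 * k).factorial * ((14 * k).factorial * ((6 * k).factorial * k.factorial)))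
    = (42 * k).factorial := by
  have h1 := Nat.choose_mul_factorial_mul_factorial (show 21 * k ≤ 42 * k by omega)
  have h2 := Nat.choose_mul_factorial_mul_factorial (show 14 * k ≤ 21 * k by omega)
  have h3 := Nat.choose_mul_factorial_mul_factorial (show 6 * k ≤ 7 * k by omega)
  rw [show 42 * k - 21 * k = 21 * k by omega] at h1
  rw [show 21 * k - 14 * k = 7 * k by omega] at h2
  rw [show 7 * k - 6 * k = k by omega] at h3
  unfold M
  have e : (42 * k).choose (21 * k) * (21 * k).choose (14 * k) * (7 * k).choose (6 * k)
      * ((21 * k).factorial * ((14 * k).factorial * ((6 * k).factorial * k.factorial)))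
      = (42 * k).choose (21 * k) * (21 * k).factorial * ((21 * k).choose (14 * k) * (14 * k).factorial
        * ((7 * k).choose (6 * k) * (6 * k).factorial * k.factorial)) := by ring
  rw [e, h3, h2, h1]

lemma div_facts (k q : ℕ) (hq : 0 < q) :
    21 * k / q + (14 * k / q + (6 * k / q + k / q)) ≤ 42 * k / q ∧
    (k < q → q ≤ 42 * k → 21 * k / q + (14 * k / q + (6 * k / q + k / q)) < 42 * k / q) := by
  have e1 : 21 * k / q = 42 * k / q / 2 := by
    rw [Nat.div_div_eq_div_mul, mul_comm q, ← Nat.div_div_eq_div_mul]; congr 1; omega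
  have e2 : 14 * k / q = 42 * k / q / 3 := by
    rw [Nat.div_div_eq_div_mul, mul_comm q, ← Nat.div_div_eq_div_mul]; congr 1; omega
  have e3 : 6 * k / q = 42 * k / q / 7 := by
    rw [Nat.div_div_eq_div_mul, mul_comm q, ← Nat.div_div_eq_div_mul]; congr 1; omega
  have e4 : k / q = 42 * k / q / 42 := by
    rw [Nat.div_div_eq_div_mul, mul_comm q, ← Nat.div_div_eq_div_mul]; congr 1; omega
  rw [e1, e2, e3]
  constructor
  · rw [e4]; omega
  · intro h1 h2
    rw [Nat.div_eq_of_lt h1] at *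
    have : 1 ≤ 42 * k / q := (Nat.one_le_div_iff hq).2 h2
    omega

lemma prime_dvd_M {k p : ℕ} (hp : p.Prime) (h1 : k < p) (h2 : p ≤ 42 * k) : p ∣ M k := by
  have hM := (M_pos k).ne'
  have hfac := congrArg (fun x => x.factorization p) (M_spec k)
  have f0 := fun n : ℕ => Nat.factorial_ne_zero n
  rw [Nat.factorization_mul hM (by simp [f0]), Nat.factorization_mul (f0 _) (by simp [f0]),
    Nat.factorization_mul (f0 _) (by simp [f0]), Nat.factorization_mul (f0 _) (f0 _)] at hfac
  simp only [Finsupp.add_apply] at hfac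
  have hlog : ∀ m, m ≤ 42 * k → Nat.log p m < Nat.log p (42 * k) + 2 := fun m hm => by
    have := Nat.log_mono_right (b := p) hm
    omega
  rw [Nat.factorization_factorial hp (hlog (21 * k) (by omega)),
    Nat.factorization_factorial hp (hlog (14 * k) (by omega)),
    Nat.factorization_factorial hp (hlog (6 * k) (by omega)),
    Nat.factorization_factorial hp (hlog k (by omega)),
    Nat.factorization_factorial hp (hlog (42 * k) (by omega)),
    ← Finset.sum_add_distrib, ← Finset.sum_add_distrib, ← Finset.sum_add_distrib] at hfac
  have hlt : ∑ i ∈ Finset.Ico 1 (Nat.log p (42 * k) + 2),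
      (21 * k / p ^ i + (14 * k / p ^ i + (6 * k / p ^ i + k / p ^ i)))
      < ∑ i ∈ Finset.Ico 1 (Nat.log p (42 * k) + 2), 42 * k / p ^ i := by
    refine Finset.sum_lt_sum (fun i _ => (div_facts k (p ^ i) (pow_pos hp.pos i)).1) ⟨1, by simp, ?_⟩
    rw [pow_one]
    exact (div_facts k p hp.pos).2 h1 h2
  by_contra hnd
  rw [Nat.factorization_eq_zero_of_not_dvd hnd] at hfac
  omega

lemma primorial_le (k : ℕ) : primorial (42 * k) ≤ primorial k * M k := by
  refine Nat.le_of_dvd (Nat.mul_pos (primorial_pos _) (M_pos k)) ?_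
  have := primorial_add k (41 * k)
  rw [show 42 * k = k + 41 * k by ring, this]
  refine mul_dvd_mul_left _ (Finset.prod_primes_dvd _ (fun _ hk ↦ (Finset.mem_filter.1 hk).2.prime) fun p hp ↦ ?_)
  rw [Finset.mem_filter, Finset.mem_Ico] at hp
  exact prime_dvd_M hp.2 (by omega) (by omega)

lemma choose_bound (a b x y : ℕ) : (a + b).choose a * (x ^ a * y ^ b) ≤ (x + y) ^ (a + b) := by
  rw [add_pow]
  have := Finset.single_le_sum (f := fun m => x ^ m * y ^ (a + b - m) * (a + b).choose m)
    (fun i _ => Nat.zero_le _) (show a ∈ Finset.range (a + b + 1) by simp)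
  simp only [Nat.add_sub_cancel_left] at this
  rw [mul_comm]
  exact this

lemma M_le (k : ℕ) : M k ≤ (2 ^ 22 * 3 ^ 15 * 7 ^ 7) ^ k := by
  have h1 := choose_bound (21 * k) (21 * k) 1 1
  have h2 := choose_bound (14 * k) (7 * k) 2 1
  have h3 := choose_bound (6 * k) k 6 1
  rw [show 21 * k + 21 * k = 42 * k by ring] at h1
  rw [show 14 * k + 7 * k = 21 * k by ring] at h2
  rw [show 6 * k + k = 7 * k by ring] at h3
  simp only [one_pow, mul_one, Nat.reduceAdd] at h1 h2 h3
  have h := Nat.mul_le_mul (Nat.mul_le_mul h1 h2) h3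
  have e1 : (42 * k).choose (21 * k) * ((21 * k).choose (14 * k) * 2 ^ (14 * k)) * ((7 * k).choose (6 * k) * 6 ^ (6 * k))
     = M k * (2 ^ 14 * 6 ^ 6) ^ k := by
    unfold M
    rw [mul_pow, ← pow_mul, ← pow_mul]
    ring
  have e2 : 2 ^ (42 * k) * 3 ^ (21 * k) * 7 ^ (7 * k) = (2 ^ 22 * 3 ^ 15 * 7 ^ 7) ^ k * (2 ^ 14 * 6 ^ 6) ^ k := by
    rw [← mul_pow, pow_mul, pow_mul, pow_mul, ← mul_pow, ← mul_pow]
    norm_num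
  rw [e1, e2] at h
  exact Nat.le_of_mul_le_mul_right h (by positivity)

lemma theta_step (k : ℕ) : Chebyshev.theta ((42 * k : ℕ) : ℝ) ≤ Chebyshev.theta (k : ℝ) + 46 * k := by
  rw [Chebyshev.theta_eq_log_primorial, Chebyshev.theta_eq_log_primorial, Nat.floor_natCast, Nat.floor_natCast]
  have h1 : (primorial (42 * k) : ℝ) ≤ primorial k * M k := by exact_mod_cast primorial_le k
  have p1 : (0 : ℝ) < primorial (42 * k) := by exact_mod_cast primorial_pos _
  have p2 : (0 : ℝ) < primorial k := by exact_mod_cast primorial_pos _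
  have p3 : (0 : ℝ) < M k := by exact_mod_cast M_pos k
  have h2 := Real.log_le_log p1 h1
  rw [Real.log_mul p2.ne' p3.ne'] at h2
  have h3 : Real.log (M k) ≤ 46 * k := by
    rw [Real.log_le_iff_le_exp p3]
    have e : Real.exp (46 * k) = (Real.exp 1 ^ 46) ^ k := by
      rw [← Real.exp_nat_mul, ← Real.exp_nat_mul]; push_cast; ring_nf
    rw [e]
    have h4 : (M k : ℝ) ≤ (2 ^ 22 * 3 ^ 15 * 7 ^ 7) ^ k := by exact_mod_cast M_le k
    refine h4.trans ?_
    have h5 : (2 ^ 22 * 3 ^ 15 * 7 ^ 7 : ℝ) ≤ Real.exp 1 ^ 46 := by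
      have h6 : (2.718 : ℝ) ^ 46 ≤ Real.exp 1 ^ 46 := by
        have := Real.exp_one_gt_d9
        gcongr
        linarith
      refine le_trans ?_ h6
      norm_num
    gcongr
  linarith

lemma theta_bound : ∃ C : ℝ, ∀ n : ℕ, Chebyshev.theta (n : ℝ) ≤ 1.15 * n + C := by
  obtain ⟨T, hT⟩ : ∃ T, T = Chebyshev.theta ((2000 : ℕ) : ℝ) := ⟨_, rfl⟩
  refine ⟨T, fun n => ?_⟩
  induction n using Nat.strong_induction_on with
  | _ n ih =>
    rcases le_or_gt n 2000 with h | h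
    · have h1 := Chebyshev.theta_mono (show (n : ℝ) ≤ ((2000 : ℕ) : ℝ) by exact_mod_cast h)
      rw [← hT] at h1
      have : (0 : ℝ) ≤ n := by positivity
      linarith
    · clear hT
      have h1 := Chebyshev.theta_mono (show (n : ℝ) ≤ ((42 * (n / 42 + 1) : ℕ) : ℝ) by
        exact_mod_cast (show n ≤ 42 * (n / 42 + 1) by omega))
      have h2 := theta_step (n / 42 + 1)
      have h3 := ih (n / 42 + 1) (by omega)
      have h4 : ((42 * (n / 42 + 1) : ℕ) : ℝ) ≤ ((n + 42 : ℕ) : ℝ) := by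
        exact_mod_cast (show 42 * (n / 42 + 1) ≤ n + 42 by omega)
      have h5 : (2000 : ℝ) < n := by exact_mod_cast h
      push_cast at *
      linarith

lemma d_bound : ∃ C D : ℝ, ∀ n : ℕ, (d n : ℝ) ≤ Real.exp (1.15 * n + C + D * √n) := by
  obtain ⟨C, hC⟩ := theta_bound
  obtain ⟨D, hD⟩ := Chebyshev.psi_sub_theta_le_mul_sqrt
  refine ⟨C, D, fun n => ?_⟩
  have h1 := hC n
  have h2 := hD n
  have h3 := Chebyshev.psi_eq_log_lcmUpto n
  have h4 : (0 : ℝ) < d n := by exact_mod_cast Nat.lcmUpto_pos n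
  rw [← Real.log_le_iff_le_exp h4, ← h3]
  linarith

lemma log33 : (3.45 : ℝ) < Real.log 33 := by
  rw [Real.lt_log_iff_exp_lt (by norm_num)]
  have h1 : Real.exp 3.45 ^ 20 < 33 ^ 20 := by
    rw [← Real.exp_nat_mul]
    have : Real.exp (((20 : ℕ) : ℝ) * 3.45) = Real.exp 1 ^ 69 := by
      rw [← Real.exp_nat_mul]; norm_num
    rw [this]
    have h2 : Real.exp 1 ^ 69 ≤ 2.7183 ^ 69 := by
      have := Real.exp_one_lt_d9
      gcongr
      linarith
    refine h2.trans_lt ?_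
    norm_num
  exact lt_of_pow_lt_pow_left₀ 20 (by norm_num) h1

lemma small : Tendsto (fun n : ℕ => (d n : ℝ) ^ 3 / A n) atTop (𝓝 0) := by
  obtain ⟨C, D, h⟩ := d_bound
  have hε : 0 < Real.log 33 - 3.45 := by linarith [log33]
  set ε := Real.log 33 - 3.45 with hεdef
  have hs : Tendsto (fun n : ℕ => √(n : ℝ)) atTop atTop :=
    Real.tendsto_sqrt_atTop.comp tendsto_natCast_atTop_atTop
  have h1 : Tendsto (fun n : ℕ => √(n : ℝ) * (ε * √(n : ℝ) + (- (3 * D)))) atTop atTop :=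
    hs.atTop_mul_atTop₀ (tendsto_atTop_add_const_right _ _ (hs.const_mul_atTop hε))
  have h2 := (Real.tendsto_exp_neg_atTop_nhds_zero.comp h1).const_mul (33 ^ 102 * Real.exp (3 * C))
  rw [mul_zero] at h2
  refine squeeze_zero (fun n => div_nonneg (by positivity) (A_pos n).le) (fun n => ?_) h2
  have hA := A_pos n
  rw [div_le_iff₀ hA]
  have h3 : (d n : ℝ) ^ 3 ≤ Real.exp (1.15 * n + C + D * √n) ^ 3 := by
    gcongr
    exact h n
  refine h3.trans ?_
  have e : Real.exp (1.15 * n + C + D * √n) ^ 3 = Real.exp (3 * C) *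
      Real.exp (-(√(n : ℝ) * (ε * √(n : ℝ) + (- (3 * D))))) * 33 ^ n := by
    have e33 : (33 : ℝ) ^ n = Real.exp (n * Real.log 33) := by
      rw [Real.exp_nat_mul, Real.exp_log (by norm_num)]
    rw [e33, ← Real.exp_nat_mul, ← Real.exp_add, ← Real.exp_add]
    congr 1
    have hsq : √(n : ℝ) * √(n : ℝ) = n := Real.mul_self_sqrt (by positivity)
    push_cast
    linear_combination ε * hsq + n * hεdef
  rw [e]
  have hg := A_growth n
  have : Real.exp (3 * C) * Real.exp (-(√(n : ℝ) * (ε * √(n : ℝ) + (- (3 * D))))) * 33 ^ n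
    ≤ Real.exp (3 * C) * Real.exp (-(√(n : ℝ) * (ε * √(n : ℝ) + (- (3 * D))))) * (33 ^ 102 * A n) := by gcongr
  refine this.trans (le_of_eq ?_)
  simp only [Function.comp]
  ring

lemma irrational_Z : Irrational Z := by
  rintro ⟨r, hr⟩
  have hq : (0 : ℝ) < r.den := by exact_mod_cast r.den_pos
  have hZ : (r.den : ℝ) * Z = r.num := by
    rw [← hr]
    have := Rat.den_mul_eq_num r
    exact_mod_cast this
  have h := small.const_mul (12 * (r.den : ℝ))
  rw [mul_zero] at h
  obtain ⟨n, hn⟩ := (h.eventually (gt_mem_nhds one_pos)).exists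
  have hd : (0 : ℝ) < d n := by exact_mod_cast Nat.lcmUpto_pos n
  have hp := form_pos n
  have hle := form_le n
  have hA := A_pos n
  have hmem : (r.den : ℝ) * (2 * (d n : ℝ) ^ 3 * (A n * Z - B n)) ∈ S := by
    have e : (r.den : ℝ) * (2 * (d n : ℝ) ^ 3 * (A n * Z - B n))
        = 2 * (d n : ℝ) ^ 3 * A n * (r.num : ℝ) - (r.den : ℝ) * (2 * (d n : ℝ) ^ 3 * B n) := by
      rw [← hZ]; ring
    rw [e]
    refine S.sub_mem (S.mul_mem (S.mul_mem (S.mul_mem (by exact_mod_cast nat_mem_S 2)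
      (S.pow_mem (nat_mem_S _) 3)) (A_mem n)) (intCast_mem S _)) (S.mul_mem (nat_mem_S _) (B_mem n))
  obtain ⟨z, hz⟩ := hmem
  simp only [eq_intCast] at hz
  have hpos : (0 : ℝ) < z := by rw [hz]; positivity
  have hlt : (z : ℝ) < 1 := by
    rw [hz]
    calc (r.den : ℝ) * (2 * (d n : ℝ) ^ 3 * (A n * Z - B n))
        ≤ (r.den : ℝ) * (2 * (d n : ℝ) ^ 3 * (6 / A n)) := by gcongr
      _ = 12 * (r.den : ℝ) * ((d n : ℝ) ^ 3 / A n) := by ring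
      _ < 1 := hn
  have h1 : 0 < z := by exact_mod_cast hpos
  have h2 : z < 1 := by exact_mod_cast hlt
  omega

end Apery

/-- **Apéry's theorem**: the real number `ζ(3) = ∑_{m=1}^∞ 1/m³` is irrational. -/
theorem zeta3_irrational : Irrational (∑' m : ℕ, 1 / ((m : ℝ) + 1) ^ 3) := by
  exact Apery.irrational_Z
end

section
/- Let a, b, c, d be complex numbers with ad − bc = 1, let F : ℂ → ℂ be an entire function, and set w(u) = (a·u + b)/(c·u + d). Then for every integer n ≥ 1 and every z ∈ ℂ with c·z + d ≠ 0, the n-th derivative of F evaluated at w(z) equals (c·z + d)^{n+1} times the n-th derivative at z of the function u ↦ (c·u + d)^{n−1} · F(w(u)); that is, F^{(n)}(w(z)) = (cz+d)^{n+1} · (d/dz)^n [ (cz+d)^{n−1} F(w(z)) ]. -/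
lemma aux_iter_analytic (G : ℂ → ℂ) (z : ℂ) (hG : AnalyticAt ℂ G z) (n : ℕ) :
    AnalyticAt ℂ (iteratedDeriv n G) z := by
  induction n with
  | zero => simpa using hG
  | succ k ih => rw [iteratedDeriv_succ]; exact ih.deriv

lemma aux_lin (c d z : ℂ) : HasDerivAt (fun u : ℂ => c * u + d) c z := by
  simpa using ((hasDerivAt_id z).const_mul c).add_const d

lemma aux_leibniz (c d : ℂ) (G : ℂ → ℂ) (n : ℕ) : ∀ z : ℂ, AnalyticAt ℂ G z →
    iteratedDeriv (n + 1) (fun u => (c * u + d) * G u) z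
      = (c * z + d) * iteratedDeriv (n + 1) G z + (n + 1) * c * iteratedDeriv n G z := by
  induction n with
  | zero =>
    intro z hG
    have := ((aux_lin c d z).mul hG.differentiableAt.hasDerivAt).deriv
    simp only [zero_add, iteratedDeriv_one, iteratedDeriv_zero]
    refine Eq.trans this ?_
    push_cast; ring
  | succ k ih =>
    intro z hG
    rw [iteratedDeriv_succ]
    have he : iteratedDeriv (k + 1) (fun u => (c * u + d) * G u) =ᶠ[nhds z]
        fun z => (c * z + d) * iteratedDeriv (k + 1) G z + (k + 1) * c * iteratedDeriv k G z := by
      filter_upwards [hG.eventually_analyticAt] with y hy using ih y hy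
    rw [he.deriv_eq]
    have h1 := (aux_iter_analytic G z hG (k + 1)).differentiableAt.hasDerivAt
    have h0 := (aux_iter_analytic G z hG k).differentiableAt.hasDerivAt
    rw [← iteratedDeriv_succ] at h1 h0
    refine Eq.trans (((aux_lin c d z).mul h1).add (h0.const_mul ((k + 1) * c))).deriv ?_
    push_cast; ring

lemma aux_mobius (a b c d : ℂ) (h : a * d - b * c = 1) (z : ℂ) (hz : c * z + d ≠ 0) :
    HasDerivAt (fun u : ℂ => (a * u + b) / (c * u + d)) (1 / (c * z + d) ^ 2) z := by
  refine ((aux_lin a b z).div (aux_lin c d z) hz).congr_deriv ?_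
  congr 1
  linear_combination h

lemma aux_main (a b c d : ℂ) (h : a * d - b * c = 1)
    (F : ℂ → ℂ) (hF : Differentiable ℂ F) (n : ℕ) :
    ∀ z : ℂ, c * z + d ≠ 0 →
      iteratedDeriv (n + 1) (fun u => (c * u + d) ^ n * F ((a * u + b) / (c * u + d))) z
      = iteratedDeriv (n + 1) F ((a * z + b) / (c * z + d)) / (c * z + d) ^ (n + 2) := by
  have hFa : ∀ y, AnalyticAt ℂ F y := fun y => hF.analyticAt y
  induction n with
  | zero =>
    intro z hz
    have := ((hF _).hasDerivAt.comp z (aux_mobius a b c d h z hz)).deriv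
    simp only [zero_add, iteratedDeriv_one, pow_zero, one_mul]
    refine Eq.trans this ?_
    ring
  | succ k ih =>
    intro z hz
    have hfun : (fun u => (c * u + d) ^ (k + 1) * F ((a * u + b) / (c * u + d)))
        = fun u => (c * u + d) * ((c * u + d) ^ k * F ((a * u + b) / (c * u + d))) := by
      funext u; ring
    have hl : ∀ a b : ℂ, AnalyticAt ℂ (fun u : ℂ => a * u + b) z := fun a b => by fun_prop
    have hG : AnalyticAt ℂ (fun u => (c * u + d) ^ k * F ((a * u + b) / (c * u + d))) z :=
      ((hl c d).pow k).mul ((hFa _).comp ((hl a b).div (hl c d) hz))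
    rw [hfun, aux_leibniz c d _ (k + 1) z hG, ih z hz, iteratedDeriv_succ]
    have he : iteratedDeriv (k + 1) (fun u => (c * u + d) ^ k * F ((a * u + b) / (c * u + d)))
        =ᶠ[nhds z] fun z =>
          iteratedDeriv (k + 1) F ((a * z + b) / (c * z + d)) / (c * z + d) ^ (k + 2) := by
      filter_upwards [(hl c d).continuousAt.eventually_ne hz] with y hy using ih y hy
    have h1 := (aux_iter_analytic F ((a * z + b) / (c * z + d)) (hFa _)
      (k + 1)).differentiableAt.hasDerivAt
    rw [← iteratedDeriv_succ] at h1
    have h2 := ((h1.comp z (aux_mobius a b c d h z hz)).div ((aux_lin c d z).pow (k + 2))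
      (pow_ne_zero _ hz)).deriv
    rw [he.deriv_eq]
    refine (congrArg (fun t => (c * z + d) * t + _) h2).trans ?_
    simp only [Function.comp, Pi.pow_apply, Nat.add_sub_cancel]
    generalize iteratedDeriv (k + 1 + 1) F ((a * z + b) / (c * z + d)) = A
    generalize iteratedDeriv (k + 1) F ((a * z + b) / (c * z + d)) = B
    rw [show k + 2 - 1 = k + 1 from rfl]
    generalize c * z + d = j at hz
    push_cast
    field_simp
    ring


/-- The operator identity `(d/dw)ⁿ = (cz+d)^{n+1} (d/dz)ⁿ (cz+d)^{n-1}` for the Möbius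
coordinate change `w = (az+b)/(cz+d)` with `ad - bc = 1`: for an entire function `F`,
every `n ≥ 1` and every `z` with `cz + d ≠ 0`,
`F⁽ⁿ⁾(w(z)) = (cz+d)^{n+1} · (d/dz)ⁿ [ (cz+d)^{n-1} F(w(z)) ]`. -/
theorem mobius_iterated_deriv (a b c d : ℂ) (h : a * d - b * c = 1)
    (F : ℂ → ℂ) (hF : Differentiable ℂ F) (n : ℕ) (hn : 1 ≤ n)
    (z : ℂ) (hz : c * z + d ≠ 0) :
    iteratedDeriv n F ((a * z + b) / (c * z + d))
      = (c * z + d) ^ (n + 1) *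
          iteratedDeriv n
            (fun u => (c * u + d) ^ (n - 1) * F ((a * u + b) / (c * u + d))) z := by
  obtain ⟨k, rfl⟩ : ∃ k, n = k + 1 := ⟨n - 1, by omega⟩
  rw [Nat.add_sub_cancel, aux_main a b c d h F hF k z hz]
  exact (mul_div_cancel₀ _ (pow_ne_zero _ hz)).symm
end
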